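/- arXiv:2101.00228 — 2 statements merged into one kernel-verified Lean document; each statement's English description precedes it below -/
import Mathlib

section
/- Let 0 < η < 1/4 and 0 < μ < 1/4, and let β > 0 be defined by η^β = 1 − μ. Let 0 ≤ θ ≤ (1−μ)/2, c₀ > 0 and C̄ > 0. Let σ : (0,1] → [0,∞) be nondecreasing with σ(1) ≤ c₀ and s^β · ∫_s^1 σ(t)/t^{1+β} dt ≤ c₀ for all s ∈ (0,1). Define A₀ = c₀ and A_k = max(σ(η^{k−1}), θ·A_{k−1}) for k ≥ 1, and let (a_k)_{k≥0} be any sequence of nonnegative reals with a₀ = 0 and a_k ≤ (1−μ)·a_{k−1} + C̄·A_{k−1} for all k ≥ 1. Then for every k ≥ 1: a_k ≤ (6C̄/((1−μ)³(1−η))) · (c₀·η^{kβ} + η^{kβ}·∫_{η^k}^1 σ(t)/t^{1+β} dt); in particular a_k ≤ 12·C̄·c₀/((1−μ)³(1−η)) for all k ≥ 0. -/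
open MeasureTheory Set

/-! Write `q = η ^ β`. If `A` decays at rate `θ < q` up to the input `s`, then `V k = a k + m * A k`
with `m = C / (q - θ)` satisfies the scalar recursion `V (k + 1) ≤ q * V k + m * s k`, so
`V n / q ^ n` is at most `V 0 + m * ∑ i < n, s i / q ^ (i + 1)`. For `s i = σ (η ^ i)` this sum is a
lower Riemann sum, up to constants, of `∫ σ t / t ^ (1 + β)` on the mesh `1 > η > η ^ 2 > ⋯`: on
`[η ^ (i + 1), η ^ i]` the integrand is at least `σ (η ^ (i + 1)) / (η ^ i) ^ (1 + β)`, and the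
length of that interval is `(1 - η) * η ^ i`. -/

lemma le_pow_mul_add_sum_div_of_le_mul_add {q : ℝ} (hq : 0 < q) {u s : ℕ → ℝ}
    (hu : ∀ k, u (k + 1) ≤ q * u k + s k) (n : ℕ) :
    u n ≤ q ^ n * (u 0 + ∑ i ∈ Finset.range n, s i / q ^ (i + 1)) := by
  have gronwall := discrete_gronwall_prod_general (fun k _ ↦ hu k) (fun _ _ ↦ hq.le) n.zero_le
  refine gronwall.trans_eq ?_
  rw [Nat.Ico_zero_eq_range, Finset.prod_const, Finset.card_range, mul_add, mul_comm,
    Finset.mul_sum]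
  congr 1
  refine Finset.sum_congr rfl fun i hi ↦ ?_
  rw [Finset.prod_const, Nat.card_Ico, pow_sub₀ q hq.ne' (Finset.mem_range.mp hi),
    Nat.succ_eq_add_one]
  ring

lemma le_pow_mul_of_coupled_recurrence {q θ C : ℝ} (hq : 0 < q) (hθ : θ < q) (hC : 0 ≤ C)
    {a A s : ℕ → ℝ} (hA_nonneg : ∀ k, 0 ≤ A k) (hA : ∀ k, A (k + 1) ≤ θ * A k + s k)
    (ha : ∀ k, a (k + 1) ≤ q * a k + C * A k) (n : ℕ) :
    a n ≤ q ^ n * (a 0 + C / (q - θ) * (A 0 + ∑ i ∈ Finset.range n, s i / q ^ (i + 1))) := by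
  set m := C / (q - θ)
  have hm : 0 ≤ m := div_nonneg hC (sub_pos.mpr hθ).le
  have hmC : m * (q - θ) = C := div_mul_cancel₀ C (sub_pos.mpr hθ).ne'
  have lyapunov_step (k : ℕ) :
      a (k + 1) + m * A (k + 1) ≤ q * (a k + m * A k) + m * s k :=
    calc a (k + 1) + m * A (k + 1)
      _ ≤ (q * a k + C * A k) + m * (θ * A k + s k) := by gcongr; exacts [ha k, hA k]
      _ = q * (a k + m * A k) + m * s k := by rw [← hmC]; ring
  calc a n
    _ ≤ a n + m * A n := le_add_of_nonneg_right (mul_nonneg hm (hA_nonneg n))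
    _ ≤ q ^ n * (a 0 + m * A 0 + ∑ i ∈ Finset.range n, m * s i / q ^ (i + 1)) :=
      le_pow_mul_add_sum_div_of_le_mul_add (u := fun k ↦ a k + m * A k) hq lyapunov_step n
    _ = q ^ n * (a 0 + m * (A 0 + ∑ i ∈ Finset.range n, s i / q ^ (i + 1))) := by
      simp only [mul_div_assoc, ← Finset.mul_sum]; ring

lemma intervalIntegrable_div_rpow_of_monotoneOn {f : ℝ → ℝ} {x y : ℝ} (p : ℝ) (hx : 0 < x)
    (hy : 0 < y) (hf : MonotoneOn f (uIcc x y)) :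
    IntervalIntegrable (fun t ↦ f t / t ^ p) volume x y := by
  simp only [div_eq_mul_inv]
  refine hf.intervalIntegrable.mul_continuousOn fun t ht ↦ ?_
  have ht_pos : 0 < t := (lt_min hx hy).trans_le ht.1
  exact ((Real.continuousAt_rpow_const t p (.inl ht_pos.ne')).inv₀
    (Real.rpow_pos_of_pos ht_pos p).ne').continuousWithinAt

lemma mul_div_rpow_le_integral_of_monotoneOn {f : ℝ → ℝ} {x y p : ℝ} (hx : 0 < x) (hxy : x ≤ y)
    (hp : 0 ≤ p) (hf : MonotoneOn f (Icc x y)) (hfx : 0 ≤ f x) :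
    (y - x) * (f x / y ^ p) ≤ ∫ t in x..y, f t / t ^ p := by
  rw [← smul_eq_mul, ← intervalIntegral.integral_const]
  refine intervalIntegral.integral_mono_on hxy intervalIntegrable_const
    (intervalIntegrable_div_rpow_of_monotoneOn p hx (hx.trans_le hxy) (by rwa [uIcc_of_le hxy]))
    fun t ht ↦ ?_
  have ht_pos : 0 < t := hx.trans_le ht.1
  have hfxt : f x ≤ f t := hf (left_mem_Icc.mpr hxy) ht ht.1
  have hpow : t ^ p ≤ y ^ p := Real.rpow_le_rpow ht_pos.le ht.2 hp
  exact div_le_div₀ (hfx.trans hfxt) hfxt (Real.rpow_pos_of_pos ht_pos p) hpow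

lemma add_div_add_div_le_three_mul_add_div {q d c I : ℝ} (hd : 0 < d) (hdq : d ≤ q) (hq : q ≤ 1)
    (hc : 0 ≤ c) (hI : 0 ≤ I) : c + (c / q + I / d) ≤ 3 * ((c + I) / d) := by
  have hc_le : c ≤ c / q := le_div_self hc (hd.trans_le hdq) hq
  have hc_div : c / q ≤ c / d := div_le_div_of_nonneg_left hc hd hdq
  have hI_div : 0 ≤ I / d := div_nonneg hI hd.le
  rw [add_div]
  linarith

section GeometricMesh

variable {η β : ℝ} {σ : ℝ → ℝ}

lemma pow_mem_Ioc_zero_one (hη0 : 0 < η) (hη1 : η ≤ 1) (k : ℕ) : η ^ k ∈ Ioc (0 : ℝ) 1 :=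
  ⟨pow_pos hη0 k, pow_le_one₀ hη0.le hη1⟩

lemma sum_div_rpow_pow_le_integral (hη0 : 0 < η) (hη1 : η ≤ 1) (hβ : 0 ≤ 1 + β)
    (hmono : MonotoneOn σ (Ioc 0 1)) (hnn : ∀ r ∈ Ioc (0 : ℝ) 1, 0 ≤ σ r) (n : ℕ) :
    (1 - η) * ∑ i ∈ Finset.range n, σ (η ^ (i + 1)) / (η ^ β) ^ i ≤
      ∫ t in (η ^ n)..1, σ t / t ^ (1 + β) := by
  have hmem := pow_mem_Ioc_zero_one hη0 hη1
  have integrable {x y : ℝ} (hx : x ∈ Ioc (0 : ℝ) 1) (hy : y ∈ Ioc (0 : ℝ) 1) :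
      IntervalIntegrable (fun t ↦ σ t / t ^ (1 + β)) volume x y :=
    intervalIntegrable_div_rpow_of_monotoneOn _ hx.1 hy.1
      (hmono.mono (ordConnected_Ioc.uIcc_subset hx hy))
  induction n with
  | zero => simp
  | succ n ih =>
    have hpow : (η ^ n) ^ (1 + β) = η ^ n * (η ^ β) ^ n := by
      rw [Real.rpow_add (hmem n).1, Real.rpow_one, Real.rpow_pow_comm hη0.le]
    have mesh_interval : (1 - η) * (σ (η ^ (n + 1)) / (η ^ β) ^ n) ≤
        ∫ t in (η ^ (n + 1))..(η ^ n), σ t / t ^ (1 + β) :=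
      calc (1 - η) * (σ (η ^ (n + 1)) / (η ^ β) ^ n)
        _ = (η ^ n - η ^ (n + 1)) * (σ (η ^ (n + 1)) / (η ^ n) ^ (1 + β)) := by
          rw [hpow]; field_simp; ring
        _ ≤ _ := mul_div_rpow_le_integral_of_monotoneOn (hmem (n + 1)).1
          (pow_le_pow_of_le_one hη0.le hη1 n.le_succ) hβ
          (hmono.mono (ordConnected_Ioc.out (hmem (n + 1)) (hmem n))) (hnn _ (hmem (n + 1)))
    rw [Finset.sum_range_succ, mul_add, add_comm, ← intervalIntegral.integral_add_adjacent_intervals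
      (integrable (hmem (n + 1)) (hmem n)) (integrable (hmem n) (right_mem_Ioc.mpr one_pos))]
    exact add_le_add mesh_interval ih

lemma sum_div_rpow_pow_succ_le (hη0 : 0 < η) (hη1 : η < 1) (hβ : 0 ≤ 1 + β)
    (hmono : MonotoneOn σ (Ioc 0 1)) (hnn : ∀ r ∈ Ioc (0 : ℝ) 1, 0 ≤ σ r) (n : ℕ) :
    ∑ i ∈ Finset.range n, σ (η ^ i) / (η ^ β) ^ (i + 1) ≤
      σ 1 / η ^ β + (∫ t in (η ^ n)..1, σ t / t ^ (1 + β)) / ((1 - η) * (η ^ β) ^ 2) := by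
  have hq : 0 < η ^ β := Real.rpow_pos_of_pos hη0 β
  have hmem := pow_mem_Ioc_zero_one hη0 hη1.le
  calc ∑ i ∈ Finset.range n, σ (η ^ i) / (η ^ β) ^ (i + 1)
    _ ≤ ∑ i ∈ Finset.range (n + 1), σ (η ^ i) / (η ^ β) ^ (i + 1) :=
      Finset.sum_le_sum_of_subset_of_nonneg (Finset.range_subset_range.mpr n.le_succ)
        fun i _ _ ↦ div_nonneg (hnn _ (hmem i)) (pow_pos hq _).le
    _ = σ 1 / η ^ β +
        (∑ i ∈ Finset.range n, σ (η ^ (i + 1)) / (η ^ β) ^ i) / (η ^ β) ^ 2 := by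
      rw [Finset.sum_range_succ', add_comm, Finset.sum_div, pow_zero, zero_add, pow_one]
      simp only [div_div, ← pow_add, add_assoc, Nat.reduceAdd]
    _ ≤ _ := by
      rw [← div_div _ (1 - η)]
      gcongr
      rw [le_div_iff₀' (sub_pos.mpr hη1)]
      exact sum_div_rpow_pow_le_integral hη0 hη1.le hβ hmono hnn n

lemma le_mul_add_integral_of_coupled_recurrence (hη0 : 0 < η) (hη1 : η < 1) (hβ : 0 ≤ β)
    {θ C : ℝ} (hθ0 : 0 ≤ θ) (hθ : θ < η ^ β) (hC : 0 ≤ C)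
    (hmono : MonotoneOn σ (Ioc 0 1)) (hnn : ∀ r ∈ Ioc (0 : ℝ) 1, 0 ≤ σ r)
    {a A : ℕ → ℝ} (hA_nonneg : ∀ k, 0 ≤ A k) (hσ1 : σ 1 ≤ A 0)
    (hA : ∀ k, A (k + 1) ≤ max (σ (η ^ k)) (θ * A k))
    (ha0 : a 0 ≤ 0) (ha : ∀ k, a (k + 1) ≤ η ^ β * a k + C * A k) (k : ℕ) :
    a k ≤ 3 * C / ((η ^ β - θ) * (η ^ β) ^ 2 * (1 - η)) *
      (A 0 * η ^ (k * β) + η ^ (k * β) * ∫ t in (η ^ k)..1, σ t / t ^ (1 + β)) := by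
  rw [Real.rpow_natCast_mul hη0.le, ← Real.rpow_pow_comm hη0.le]
  set q := η ^ β
  set I := ∫ t in (η ^ k)..1, σ t / t ^ (1 + β)
  have hq0 : 0 < q := Real.rpow_pos_of_pos hη0 β
  have hq1 : q ≤ 1 := Real.rpow_le_one hη0.le hη1.le hβ
  have hqθ : 0 < q - θ := sub_pos.mpr hθ
  have h1η : 0 < 1 - η := sub_pos.mpr hη1
  have hden_le : (1 - η) * q ^ 2 ≤ q := by
    rw [sq, ← mul_assoc]
    exact mul_le_of_le_one_left hq0.le (mul_le_one₀ (sub_le_self 1 hη0.le) hq0.le hq1)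
  have hmem := pow_mem_Ioc_zero_one hη0 hη1.le
  have hI : 0 ≤ I := intervalIntegral.integral_nonneg (hmem k).2 fun t ht ↦
    have ht_pos : 0 < t := (hmem k).1.trans_le ht.1
    div_nonneg (hnn t ⟨ht_pos, ht.2⟩) (Real.rpow_pos_of_pos ht_pos _).le
  have hA_add (j : ℕ) : A (j + 1) ≤ θ * A j + σ (η ^ j) := (hA j).trans <|
    max_le (le_add_of_nonneg_left (mul_nonneg hθ0 (hA_nonneg j)))
      (le_add_of_nonneg_right (hnn _ (hmem j)))
  calc a k
    _ ≤ q ^ k * (a 0 + C / (q - θ) *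
        (A 0 + ∑ i ∈ Finset.range k, σ (η ^ i) / q ^ (i + 1))) :=
      le_pow_mul_of_coupled_recurrence hq0 hθ hC hA_nonneg hA_add ha k
    _ ≤ q ^ k * (0 + C / (q - θ) * (A 0 + (A 0 / q + I / ((1 - η) * q ^ 2)))) := by
      gcongr
      exact (sum_div_rpow_pow_succ_le hη0 hη1 (by linarith) hmono hnn k).trans (by gcongr)
    _ ≤ q ^ k * (0 + C / (q - θ) * (3 * ((A 0 + I) / ((1 - η) * q ^ 2)))) := by
      gcongr
      exact add_div_add_div_le_three_mul_add_div (by positivity) hden_le hq1 (hA_nonneg 0) hI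
    _ = _ := by field_simp; ring

end GeometricMesh

theorem stmt_12_general {η μ β θ c₀ Cb : ℝ} (hη0 : 0 < η) (hη1 : η < 1) (hμ0 : 0 ≤ μ) (hμ1 : μ < 1)
    (hβdef : η ^ β = 1 - μ) (hθ : θ ≤ (1 - μ) / 2) (hCb : 0 ≤ Cb)
    {σ : ℝ → ℝ} (hmono : MonotoneOn σ (Ioc 0 1)) (hnn : ∀ r ∈ Ioc (0 : ℝ) 1, 0 ≤ σ r)
    (hσ1 : σ 1 ≤ c₀)
    (hint : ∀ s : ℝ, 0 < s → s < 1 →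
      s ^ β * ∫ t in Ioc s 1, σ t / t ^ (1 + β) ≤ c₀)
    {A : ℕ → ℝ} (hA0 : A 0 = c₀)
    (hA : ∀ k : ℕ, A (k + 1) = max (σ (η ^ k)) (θ * A k))
    {a : ℕ → ℝ} (ha0 : a 0 = 0)
    (harec : ∀ k : ℕ, a (k + 1) ≤ (1 - μ) * a k + Cb * A k) :
    (∀ k : ℕ,
      a k ≤ 6 * Cb / ((1 - μ) ^ 3 * (1 - η)) *
        (c₀ * η ^ ((k : ℝ) * β) +
          η ^ ((k : ℝ) * β) * ∫ t in Ioc (η ^ k : ℝ) 1, σ t / t ^ (1 + β))) ∧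
    ∀ k : ℕ, a k ≤ 12 * Cb * c₀ / ((1 - μ) ^ 3 * (1 - η)) := by
  have hq0 : 0 < 1 - μ := sub_pos.mpr hμ1
  have h1η : 0 < 1 - η := sub_pos.mpr hη1
  have hmem := pow_mem_Ioc_zero_one hη0 hη1.le
  have hβ : 0 ≤ β := by
    by_contra! hβ_neg
    linarith [Real.one_lt_rpow_of_pos_of_lt_one_of_neg hη0 hη1 hβ_neg]
  have hc₀ : 0 ≤ c₀ := (hnn 1 (right_mem_Ioc.mpr one_pos)).trans hσ1
  have hA_nonneg : ∀ k, 0 ≤ A k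
    | 0 => hA0 ▸ hc₀
    | k + 1 => hA k ▸ le_max_of_le_left (hnn _ (hmem k))
  have hA_le (k : ℕ) : A (k + 1) ≤ max (σ (η ^ k)) ((1 - μ) / 2 * A k) :=
    (hA k).trans_le (max_le_max_left _ (mul_le_mul_of_nonneg_right hθ (hA_nonneg k)))
  have bound (k : ℕ) : a k ≤ 6 * Cb / ((1 - μ) ^ 3 * (1 - η)) *
      (c₀ * η ^ ((k : ℝ) * β) +
        η ^ ((k : ℝ) * β) * ∫ t in Ioc (η ^ k : ℝ) 1, σ t / t ^ (1 + β)) := by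
    have h := le_mul_add_integral_of_coupled_recurrence hη0 hη1 hβ (half_pos hq0).le
      ((half_lt_self hq0).trans_eq hβdef.symm) hCb hmono hnn hA_nonneg (hσ1.trans_eq hA0.symm)
      hA_le ha0.le (hβdef ▸ harec) k
    have hconst : 3 * Cb / ((1 - μ - (1 - μ) / 2) * (1 - μ) ^ 2 * (1 - η)) =
        6 * Cb / ((1 - μ) ^ 3 * (1 - η)) := by
      rw [sub_half]; field_simp; ring
    rwa [hA0, hβdef, hconst, intervalIntegral.integral_of_le (hmem k).2] at h
  refine ⟨bound, fun k ↦ ?_⟩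
  rcases Nat.eq_zero_or_pos k with rfl | hk
  · rw [ha0]; positivity
  have hpow_le : η ^ ((k : ℝ) * β) ≤ 1 := Real.rpow_le_one hη0.le hη1.le (by positivity)
  have hint_k := hint (η ^ k) (hmem k).1 (pow_lt_one₀ hη0.le hη1 hk.ne')
  rw [← Real.rpow_natCast_mul hη0.le] at hint_k
  calc a k
    _ ≤ 6 * Cb / ((1 - μ) ^ 3 * (1 - η)) * (c₀ * 1 + c₀) := (bound k).trans (by gcongr)
    _ = 12 * Cb * c₀ / ((1 - μ) ^ 3 * (1 - η)) := by ring

/-- The estimate (3.9) on the sequence `(a_k)`: under the recursions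
`A_k = max(σ(η^{k−1}), θ A_{k−1})` and `a_k ≤ (1−μ)a_{k−1} + C̄ A_{k−1}` with
`η^β = 1 − μ`, `θ ≤ (1−μ)/2`, one has for `k ≥ 1`
`a_k ≤ (6C̄/((1−μ)³(1−η)))(c₀ η^{kβ} + η^{kβ} ∫_{η^k}^1 σ(t)/t^{1+β} dt)`,
and in particular `a_k ≤ 12 C̄ c₀ /((1−μ)³(1−η))` for all `k`. -/
theorem stmt_12 (η μ : ℝ) (hη0 : 0 < η) (hη4 : η < 1 / 4) (hμ0 : 0 < μ) (hμ4 : μ < 1 / 4)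
    (β : ℝ) (hβ : 0 < β) (hβdef : η ^ β = 1 - μ)
    (θ : ℝ) (hθ0 : 0 ≤ θ) (hθ : θ ≤ (1 - μ) / 2)
    (c₀ Cb : ℝ) (hc₀ : 0 < c₀) (hCb : 0 < Cb)
    (σ : ℝ → ℝ) (hmono : MonotoneOn σ (Ioc 0 1)) (hnn : ∀ r ∈ Ioc (0 : ℝ) 1, 0 ≤ σ r)
    (hσ1 : σ 1 ≤ c₀)
    (hint : ∀ s : ℝ, 0 < s → s < 1 →
      s ^ β * ∫ t in Ioc s 1, σ t / t ^ (1 + β) ≤ c₀)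
    (A : ℕ → ℝ) (hA0 : A 0 = c₀)
    (hA : ∀ k : ℕ, A (k + 1) = max (σ (η ^ k)) (θ * A k))
    (a : ℕ → ℝ) (ha0 : a 0 = 0) (hann : ∀ k, 0 ≤ a k)
    (harec : ∀ k : ℕ, a (k + 1) ≤ (1 - μ) * a k + Cb * A k) :
    (∀ k : ℕ, 1 ≤ k →
      a k ≤ 6 * Cb / ((1 - μ) ^ 3 * (1 - η)) *
        (c₀ * η ^ ((k : ℝ) * β) +
          η ^ ((k : ℝ) * β) * ∫ t in Ioc (η ^ k : ℝ) 1, σ t / t ^ (1 + β))) ∧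
    ∀ k : ℕ, a k ≤ 12 * Cb * c₀ / ((1 - μ) ^ 3 * (1 - η)) := by
  have h := stmt_12_general hη0 (by linarith) hμ0.le (by linarith) hβdef hθ hCb.le hmono hnn hσ1
    hint hA0 hA ha0 harec
  exact ⟨fun k _ ↦ h.1 k, h.2⟩
end

section
/- Let n ≥ 2 and 0 < λ ≤ Λ, set α = nΛ/λ, and define v(x) = 2(1 − |x + eₙ|^{−α}) for x ≠ −eₙ. Then: (i) for every x with xₙ > 0 and every real symmetric n×n matrix A with λI ≼ A ≼ ΛI in the Loewner order, tr(A · D²v(x)) ≤ 0 (i.e. M⁺(D²v, λ, Λ) ≤ 0 in the upper half-space); (ii) v(x) ≥ 0 whenever xₙ ≥ 0; (iii) v(x) ≥ 1 whenever |x| = 1 and xₙ ≥ 0; (iv) v(0) = 0; (v) v(t·eₙ) ≤ 2αt for all t ≥ 0. -/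
open MeasureTheory Set

noncomputable section

/-- Euclidean space `ℝⁿ`. -/
abbrev EucSp (n : ℕ) := EuclideanSpace ℝ (Fin n)

/-- The last coordinate `xₙ` of a point `x ∈ ℝⁿ`. -/
def lastCoord (n : ℕ) (x : EucSp n) : ℝ :=
  if h : 0 < n then x ⟨n - 1, Nat.sub_lt h Nat.one_pos⟩ else 0

/-- The standard basis vector `eₙ`. -/
def lastBasis (n : ℕ) : EucSp n :=
  if h : 0 < n then EuclideanSpace.single ⟨n - 1, Nat.sub_lt h Nat.one_pos⟩ 1 else 0

/-- The norm `|x′|` of the horizontal part of `x = (x′, xₙ)`. -/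
def primeNorm (n : ℕ) (x : EucSp n) : ℝ := ‖x - lastCoord n x • lastBasis n‖

/-- The Hessian matrix `D²φ(x)` of a function `φ` at `x`. -/
def hessianMatrix (n : ℕ) (φ : EucSp n → ℝ) (x : EucSp n) : Matrix (Fin n) (Fin n) ℝ :=
  Matrix.of fun i j =>
    iteratedFDeriv ℝ 2 φ x ![EuclideanSpace.single i 1, EuclideanSpace.single j 1]

/-- `A` is a symmetric matrix with `λ I ≼ A ≼ Λ I` in the Loewner order. -/
def IsElliptic (n : ℕ) (lam Lam : ℝ) (A : Matrix (Fin n) (Fin n) ℝ) : Prop :=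
  A.IsSymm ∧ (A - lam • (1 : Matrix (Fin n) (Fin n) ℝ)).PosSemidef ∧
    ((Lam • (1 : Matrix (Fin n) (Fin n) ℝ)) - A).PosSemidef

/-- The viscosity Pucci class `S*(λ, Λ, f)` on an open set `U`. For `f = 0` this is
the class `S(λ, Λ, 0)`. -/
def InPucciStar (n : ℕ) (lam Lam : ℝ) (f : EucSp n → ℝ) (U : Set (EucSp n))
    (u : EucSp n → ℝ) : Prop :=
  ∀ φ : EucSp n → ℝ, ContDiff ℝ 2 φ →
    (∀ x ∈ U, IsLocalMaxOn (fun y => u y - φ y) U x →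
      ∃ A : Matrix (Fin n) (Fin n) ℝ, IsElliptic n lam Lam A ∧
        -|f x| ≤ (A * hessianMatrix n φ x).trace) ∧
    (∀ x ∈ U, IsLocalMinOn (fun y => u y - φ y) U x →
      ∃ A : Matrix (Fin n) (Fin n) ℝ, IsElliptic n lam Lam A ∧
        (A * hessianMatrix n φ x).trace ≤ |f x|)

/-- The `Lⁿ` norm `‖f‖_{Lⁿ(E)} = (∫_E |f|ⁿ)^{1/n}`. -/
def lnNorm (n : ℕ) (f : EucSp n → ℝ) (E : Set (EucSp n)) : ℝ :=
  (∫ x in E, |f x| ^ (n : ℝ)) ^ ((n : ℝ)⁻¹)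

/-- A modulus of continuity: nonnegative, nondecreasing on `[0,∞)`, tending to `0` at `0⁺`. -/
def IsModulus (ω : ℝ → ℝ) : Prop :=
  (∀ r, 0 ≤ ω r) ∧ MonotoneOn ω (Ici 0) ∧
    Filter.Tendsto ω (nhdsWithin 0 (Ioi 0)) (nhds 0)

/-- A Dini function: a modulus of continuity with `∫₀¹ ω(r)/r dr < ∞`. -/
def IsDini (ω : ℝ → ℝ) : Prop :=
  IsModulus ω ∧ IntegrableOn (fun r => ω r / r) (Ioc 0 1) volume

/-- The upper half ball `B_r⁺`. -/
def upperHalfBall (n : ℕ) (r : ℝ) : Set (EucSp n) :=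
  {x | x ∈ Metric.ball (0 : EucSp n) r ∧ 0 < lastCoord n x}

/-- The flat part `T_r = B_r ∩ {xₙ = 0}`. -/
def flatPart (n : ℕ) (r : ℝ) : Set (EucSp n) :=
  {x | x ∈ Metric.ball (0 : EucSp n) r ∧ lastCoord n x = 0}

/-!
For `p = -α` the Hessian of `‖y‖ ^ p` is `α ‖y‖ ^ (-α - 4) ((α + 2) y yᵀ - ‖y‖² I)`, so its trace
against an elliptic `A` is a positive multiple of `(α + 2) ⟨A y, y⟩ - ‖y‖² tr A`. Ellipticity gives
`⟨A y, y⟩ ≥ λ ‖y‖²` and `tr A ≤ n Λ`: the radial direction outweighs all the others as soon as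
`n Λ ≤ (α + 2) λ`. The remaining bounds only use that `‖x + e‖² ≥ ‖x‖² + 1` for a unit vector `e`
with `⟨x, e⟩ ≥ 0`, and, along the axis, Bernoulli's inequality.
-/

section NormRpow

open scoped InnerProductSpace

variable {E : Type*} [NormedAddCommGroup E] [InnerProductSpace ℝ E]

lemma hasFDerivAt_norm_rpow_of_ne_zero {x : E} (hx : x ≠ 0) (p : ℝ) :
    HasFDerivAt (fun y : E => ‖y‖ ^ p) ((p * ‖x‖ ^ (p - 2)) • innerSL ℝ x) x := by
  have hsq := (hasStrictFDerivAt_norm_sq x).hasFDerivAt.rpow_const (p := p / 2) (by simp [hx])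
  convert hsq using 1
  · ext y
    rw [← Real.rpow_natCast_mul (norm_nonneg y)]
    ring_nf
  · rw [← Real.rpow_natCast_mul (norm_nonneg x), ← Nat.cast_smul_eq_nsmul ℝ, smul_smul]
    ring_nf

lemma iteratedFDeriv_two_norm_rpow {x : E} (hx : x ≠ 0) (p : ℝ) (h k : E) :
    iteratedFDeriv ℝ 2 (fun y : E => ‖y‖ ^ p) x ![h, k] =
      p * ‖x‖ ^ (p - 2) * ⟪h, k⟫_ℝ + p * (p - 2) * ‖x‖ ^ (p - 4) * (⟪x, h⟫_ℝ * ⟪x, k⟫_ℝ) := by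
  have hgrad : fderiv ℝ (fun y : E => ‖y‖ ^ p) =ᶠ[nhds x]
      fun y => (p * ‖y‖ ^ (p - 2)) • innerSL ℝ y := by
    filter_upwards [isOpen_ne.mem_nhds hx] with y hy
    exact (hasFDerivAt_norm_rpow_of_ne_zero hy p).fderiv
  have hhess := ((hasFDerivAt_norm_rpow_of_ne_zero hx (p - 2)).const_mul p).fun_smul
    (innerSL ℝ : E →L[ℝ] E →L[ℝ] ℝ).hasFDerivAt
  have hexp : p - 2 - 2 = p - 4 := by ring
  rw [iteratedFDeriv_two_apply, hgrad.fderiv_eq, hhess.fderiv]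
  simp only [hexp, Matrix.cons_val_zero, Matrix.cons_val_one, Matrix.cons_val_fin_one, add_apply,
    smul_apply, ContinuousLinearMap.smulRight_apply, innerSL_apply_apply ℝ, smul_eq_mul]
  ring

end NormRpow

section Hessian

variable {n : ℕ}

lemma hessianMatrix_const_mul_const_sub (a c : ℝ) (φ : EucSp n → ℝ) (x : EucSp n) :
    hessianMatrix n (fun y => a * (c - φ y)) x = -a • hessianMatrix n φ x := by
  have hgrad : fderiv ℝ (fun y => a * (c - φ y)) = -a • fderiv ℝ φ := by
    ext1 y
    have hsmul : (fun z => a * (c - φ z)) = a • fun z => c - φ z := rfl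
    rw [hsmul, fderiv_const_smul_field, Pi.smul_apply, fderiv_const_sub, smul_neg, Pi.smul_apply,
      neg_smul]
  have hhess : fderiv ℝ (fderiv ℝ fun y => a * (c - φ y)) x = -a • fderiv ℝ (fderiv ℝ φ) x := by
    rw [hgrad]
    exact congrFun (fderiv_const_smul_field (f := fderiv ℝ φ) (-a)) x
  ext i j
  simp only [hessianMatrix, iteratedFDeriv_two_apply, hhess, Matrix.of_apply, Matrix.smul_apply,
    smul_apply]

lemma hessianMatrix_comp_add_right (φ : EucSp n → ℝ) (a x : EucSp n) :
    hessianMatrix n (fun y => φ (y + a)) x = hessianMatrix n φ (x + a) := by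
  simp only [hessianMatrix, iteratedFDeriv_comp_add_right]

lemma hessianMatrix_norm_rpow {x : EucSp n} (hx : x ≠ 0) (p : ℝ) :
    hessianMatrix n (fun y => ‖y‖ ^ p) x =
      (p * ‖x‖ ^ (p - 2)) • (1 : Matrix (Fin n) (Fin n) ℝ) +
        (p * (p - 2) * ‖x‖ ^ (p - 4)) • Matrix.vecMulVec x x := by
  ext i j
  simp [hessianMatrix, iteratedFDeriv_two_norm_rpow hx, Matrix.vecMulVec_apply, Matrix.one_apply,
    EuclideanSpace.inner_single_right, PiLp.single_apply, eq_comm]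

end Hessian

section Elliptic

open scoped Matrix

variable {n : ℕ} {lam Lam : ℝ} {A : Matrix (Fin n) (Fin n) ℝ}

lemma IsElliptic.trace_le (hA : IsElliptic n lam Lam A) : A.trace ≤ n * Lam := by
  have := hA.2.2.trace_nonneg
  simp only [Matrix.trace_sub, Matrix.trace_smul, Matrix.trace_one, Fintype.card_fin,
    smul_eq_mul] at this
  linarith

lemma IsElliptic.mul_norm_sq_le (hA : IsElliptic n lam Lam A) (y : EucSp n) :
    lam * ‖y‖ ^ 2 ≤ A *ᵥ y ⬝ᵥ y := by
  have := hA.2.1.dotProduct_mulVec_nonneg (y : Fin n → ℝ)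
  have hnorm : y.ofLp ⬝ᵥ y.ofLp = ‖y‖ ^ 2 := by
    rw [EuclideanSpace.real_norm_sq_eq]
    simp only [dotProduct, sq]
  rw [star_trivial, Matrix.sub_mulVec, dotProduct_sub, Matrix.smul_mulVec, Matrix.one_mulVec,
    dotProduct_smul, hnorm, smul_eq_mul, dotProduct_comm] at this
  linarith

lemma trace_mul_hessianMatrix_norm_rpow_neg (A : Matrix (Fin n) (Fin n) ℝ) {y : EucSp n}
    (hy : y ≠ 0) (α : ℝ) :
    (A * hessianMatrix n (fun z => ‖z‖ ^ (-α)) y).trace =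
      α * ‖y‖ ^ (-α - 4) * ((α + 2) * (A *ᵥ y ⬝ᵥ y) - ‖y‖ ^ 2 * A.trace) := by
  have hpow : ‖y‖ ^ (-α - 2) = ‖y‖ ^ (-α - 4) * ‖y‖ ^ 2 := by
    rw [← Real.rpow_add_natCast (norm_ne_zero_iff.mpr hy)]
    norm_num [sub_add]
  rw [hessianMatrix_norm_rpow hy, hpow]
  simp only [Matrix.mul_add, Matrix.mul_smul, Matrix.mul_one, Matrix.mul_vecMulVec,
    Matrix.trace_add, Matrix.trace_smul, Matrix.trace_vecMulVec, smul_eq_mul]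
  ring

lemma IsElliptic.trace_mul_hessianMatrix_norm_rpow_neg_nonneg (hA : IsElliptic n lam Lam A)
    {α : ℝ} (hα : 0 ≤ α) (hell : n * Lam ≤ (α + 2) * lam) {y : EucSp n} (hy : y ≠ 0) :
    0 ≤ (A * hessianMatrix n (fun z => ‖z‖ ^ (-α)) y).trace := by
  rw [trace_mul_hessianMatrix_norm_rpow_neg A hy]
  refine mul_nonneg (by positivity) (sub_nonneg.mpr ?_)
  calc ‖y‖ ^ 2 * A.trace ≤ ‖y‖ ^ 2 * ((α + 2) * lam) := by
        gcongr
        exact hA.trace_le.trans hell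
    _ = (α + 2) * (lam * ‖y‖ ^ 2) := by ring
    _ ≤ (α + 2) * (A *ᵥ y ⬝ᵥ y) := by
        gcongr
        exact hA.mul_norm_sq_le y

end Elliptic

section AcuteAngle

open scoped InnerProductSpace

variable {E : Type*} [SeminormedAddCommGroup E] [InnerProductSpace ℝ E] {e x : E}

lemma norm_sq_add_norm_sq_le_norm_add_sq (hxe : 0 ≤ ⟪x, e⟫_ℝ) :
    ‖x‖ ^ 2 + ‖e‖ ^ 2 ≤ ‖x + e‖ ^ 2 := by
  rw [norm_add_sq_real]
  linarith

lemma one_le_norm_add (he : ‖e‖ = 1) (hxe : 0 ≤ ⟪x, e⟫_ℝ) : 1 ≤ ‖x + e‖ := by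
  have := norm_sq_add_norm_sq_le_norm_add_sq hxe
  rw [he] at this
  exact (one_le_sq_iff₀ (norm_nonneg _)).mp (by linarith [sq_nonneg ‖x‖])

end AcuteAngle

lemma one_sub_mul_le_one_add_rpow_neg {α t : ℝ} (ht : -1 < t) (hα : 0 ≤ α) :
    1 - α * t ≤ (1 + t) ^ (-α) := by
  have hpos : 0 < 1 + t := by linarith
  have hlog : Real.log (1 + t) ≤ t := by linarith [Real.log_le_sub_one_of_pos hpos]
  calc 1 - α * t ≤ Real.log (1 + t) * -α + 1 := by linarith [mul_le_mul_of_nonneg_left hlog hα]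
    _ ≤ Real.exp (Real.log (1 + t) * -α) := Real.add_one_le_exp _
    _ = (1 + t) ^ (-α) := (Real.rpow_def_of_pos hpos _).symm

section Barrier

variable {E : Type*} [SeminormedAddCommGroup E] {e x : E} {α : ℝ}

/-- The radial barrier `2 (1 - ‖x + e‖ ^ (-α))` with pole at `-e`, normalised to vanish on the unit
sphere around the pole. -/
def barrier (e : E) (α : ℝ) (x : E) : ℝ := 2 * (1 - ‖x + e‖ ^ (-α))

lemma barrier_nonneg (hα : 0 ≤ α) (hx : 1 ≤ ‖x + e‖) : 0 ≤ barrier e α x := by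
  have := Real.rpow_le_one_of_one_le_of_nonpos hx (neg_nonpos.mpr hα)
  unfold barrier
  linarith

lemma one_le_barrier (hα : 2 ≤ α) (hx : 2 ≤ ‖x + e‖ ^ 2) : 1 ≤ barrier e α x := by
  have hone : 1 ≤ ‖x + e‖ := (one_le_sq_iff₀ (norm_nonneg _)).mp (by linarith)
  have hpow : ‖x + e‖ ^ (-α) ≤ 1 / 2 :=
    calc ‖x + e‖ ^ (-α) ≤ ‖x + e‖ ^ (-(2 : ℝ)) := by gcongr
      _ = (‖x + e‖ ^ 2)⁻¹ := by rw [Real.rpow_neg (norm_nonneg _), Real.rpow_two]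
      _ ≤ 1 / 2 := by rw [one_div]; gcongr
  unfold barrier
  linarith

lemma barrier_zero (he : ‖e‖ = 1) (α : ℝ) : barrier e α 0 = 0 := by
  simp [barrier, he]

lemma barrier_smul_self_le [NormedSpace ℝ E] (he : ‖e‖ = 1) (hα : 0 ≤ α) {t : ℝ} (ht : -1 < t) :
    barrier e α (t • e) ≤ 2 * α * t := by
  have hnorm : ‖t • e + e‖ = 1 + t := by
    calc ‖t • e + e‖ = ‖(1 + t) • e‖ := by rw [add_smul, one_smul, add_comm]
      _ = 1 + t := by rw [norm_smul, he, mul_one, Real.norm_of_nonneg (by linarith)]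
  have := one_sub_mul_le_one_add_rpow_neg ht hα
  rw [barrier, hnorm]
  linarith

lemma hessianMatrix_barrier {n : ℕ} (e : EucSp n) (α : ℝ) (x : EucSp n) :
    hessianMatrix n (barrier e α) x =
      (-2 : ℝ) • hessianMatrix n (fun y => ‖y‖ ^ (-α)) (x + e) :=
  calc hessianMatrix n (barrier e α) x
      = (-2 : ℝ) • hessianMatrix n (fun y => ‖y + e‖ ^ (-α)) x :=
        hessianMatrix_const_mul_const_sub 2 1 _ x
    _ = (-2 : ℝ) • hessianMatrix n (fun y => ‖y‖ ^ (-α)) (x + e) := by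
        rw [hessianMatrix_comp_add_right (fun y => ‖y‖ ^ (-α))]

lemma IsElliptic.trace_mul_hessianMatrix_barrier_nonpos {n : ℕ} {lam Lam : ℝ}
    {A : Matrix (Fin n) (Fin n) ℝ} (hA : IsElliptic n lam Lam A) (hα : 0 ≤ α)
    (hell : n * Lam ≤ (α + 2) * lam) {e x : EucSp n} (hx : x + e ≠ 0) :
    (A * hessianMatrix n (barrier e α) x).trace ≤ 0 := by
  rw [hessianMatrix_barrier, Matrix.mul_smul, Matrix.trace_smul, smul_eq_mul]
  linarith [hA.trace_mul_hessianMatrix_norm_rpow_neg_nonneg hα hell hx]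

end Barrier

section LastBasis

open scoped InnerProductSpace

variable {n : ℕ}

lemma norm_lastBasis (hn : 0 < n) : ‖lastBasis n‖ = 1 := by
  simp [lastBasis, hn]

lemma inner_lastBasis (x : EucSp n) : ⟪x, lastBasis n⟫_ℝ = lastCoord n x := by
  by_cases hn : 0 < n <;> simp [lastCoord, lastBasis, hn, EuclideanSpace.inner_single_right]

end LastBasis

theorem stmt_17_general {n : ℕ} (hn : 0 < n) {lam Lam α : ℝ} (hα : 2 ≤ α)
    (hell : n * Lam ≤ (α + 2) * lam)
    (v : EucSp n → ℝ) (hv : ∀ x, v x = 2 * (1 - ‖x + lastBasis n‖ ^ (-α))) :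
    (∀ x : EucSp n, 0 < lastCoord n x →
      ∀ A : Matrix (Fin n) (Fin n) ℝ, IsElliptic n lam Lam A →
        (A * hessianMatrix n v x).trace ≤ 0) ∧
    (∀ x : EucSp n, 0 ≤ lastCoord n x → 0 ≤ v x) ∧
    (∀ x : EucSp n, ‖x‖ = 1 → 0 ≤ lastCoord n x → 1 ≤ v x) ∧
    v 0 = 0 ∧
    (∀ t : ℝ, 0 ≤ t → v (t • lastBasis n) ≤ 2 * α * t) := by
  obtain rfl : v = barrier (lastBasis n) α := funext hv
  have he := norm_lastBasis hn
  have hα₀ : 0 ≤ α := zero_le_two.trans hα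
  simp only [← inner_lastBasis]
  refine ⟨fun x hx A hA => ?_, fun x hx => ?_, fun x hx₁ hx => ?_, ?_, fun t ht => ?_⟩
  · have hpole : x + lastBasis n ≠ 0 :=
      norm_pos_iff.mp (one_pos.trans_le (one_le_norm_add he hx.le))
    exact hA.trace_mul_hessianMatrix_barrier_nonpos hα₀ hell hpole
  · exact barrier_nonneg hα₀ (one_le_norm_add he hx)
  · have hsq := norm_sq_add_norm_sq_le_norm_add_sq hx
    rw [hx₁, he] at hsq
    exact one_le_barrier hα (by linarith)
  · exact barrier_zero he α
  · exact barrier_smul_self_le he hα₀ (by linarith)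

/-- The barrier `v(x) = 2(1 − |x + eₙ|^{−α})` with `α = nΛ/λ`: it is a supersolution of
the Pucci maximal operator in the upper half-space (`M⁺(D²v,λ,Λ) ≤ 0`), nonnegative on
`{xₙ ≥ 0}`, at least `1` on the upper unit sphere, vanishes at `0`, and grows at most
linearly along the `eₙ`-axis. -/
theorem stmt_17 {n : ℕ} (hn : 2 ≤ n) (lam Lam : ℝ) (hlam : 0 < lam) (hLam : lam ≤ Lam)
    (α : ℝ) (hα : α = n * Lam / lam)
    (v : EucSp n → ℝ) (hv : ∀ x, v x = 2 * (1 - ‖x + lastBasis n‖ ^ (-α))) :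
    (∀ x : EucSp n, 0 < lastCoord n x →
      ∀ A : Matrix (Fin n) (Fin n) ℝ, IsElliptic n lam Lam A →
        (A * hessianMatrix n v x).trace ≤ 0) ∧
    (∀ x : EucSp n, 0 ≤ lastCoord n x → 0 ≤ v x) ∧
    (∀ x : EucSp n, ‖x‖ = 1 → 0 ≤ lastCoord n x → 1 ≤ v x) ∧
    v 0 = 0 ∧
    (∀ t : ℝ, 0 ≤ t → v (t • lastBasis n) ≤ 2 * α * t) := by
  have hαlam : α * lam = n * Lam := by rw [hα, div_mul_cancel₀ _ hlam.ne']
  have hα₂ : 2 ≤ α := by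
    rw [hα, le_div_iff₀ hlam]
    gcongr
    exact_mod_cast hn
  exact stmt_17_general (by lia) hα₂ (by linarith) v hv
end
end
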